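/- Let f : ℍⁿ_κ → ℝ be differentiable with gradient Lipschitz continuous on a closed κ-hyperbolically convex set C with constant L ≥ 0, let 0 < α < 1/L, and let (p_k) be generated by p_{k+1} = P_C(exp_{p_k}(−α grad f(p_k))) starting from p₀ ∈ C. Then p_k ∈ C for all k, and f(p_{k+1}) ≤ f(p_k) − ((1−αL)/(2α))·d(p_k, p_{k+1})² for all k; in particular, (f(p_k)) is non-increasing. -/

import Mathlib

noncomputable section

/-- Lorentzian inner product on ℝ^{n+1}. -/
def lip {n : ℕ} (x y : Fin (n+1) → ℝ) : ℝ :=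
  (∑ i : Fin n, x i.castSucc * y i.castSucc) - x (Fin.last n) * y (Fin.last n)

/-- Lorentzian norm (of vectors with nonnegative self-product). -/
def lnorm {n : ℕ} (x : Fin (n+1) → ℝ) : ℝ := Real.sqrt (lip x x)

/-- Euclidean dot product. -/
def edot {n : ℕ} (x y : Fin (n+1) → ℝ) : ℝ := ∑ i, x i * y i

/-- The matrix J = diag(1,…,1,−1) as a map. -/
def Jm {n : ℕ} (x : Fin (n+1) → ℝ) : Fin (n+1) → ℝ :=
  fun i => if i = Fin.last n then -(x i) else x i

/-- The κ-hyperbolic space form (hyperboloid model). -/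
def Hyp {n : ℕ} (κ : ℝ) : Set (Fin (n+1) → ℝ) :=
  {p | lip p p = -1/κ ∧ 0 < p (Fin.last n)}

/-- Inverse hyperbolic cosine. -/
def arcosh (x : ℝ) : ℝ := Real.log (x + Real.sqrt (x^2 - 1))

/-- Intrinsic distance on the κ-hyperbolic space form. -/
def dH {n : ℕ} (κ : ℝ) (p q : Fin (n+1) → ℝ) : ℝ :=
  (1 / Real.sqrt κ) * arcosh (-(κ * lip p q))

/-- Lorentzian projection onto the tangent space at p. -/
def projT {n : ℕ} (κ : ℝ) (p x : Fin (n+1) → ℝ) : Fin (n+1) → ℝ :=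
  x + (κ * lip p x) • p

/-- Logarithm map of the κ-hyperbolic space form. -/
def logH {n : ℕ} (κ : ℝ) (p q : Fin (n+1) → ℝ) : Fin (n+1) → ℝ :=
  (dH κ p q / lnorm (projT κ p q)) • projT κ p q

/-- Exponential map of the κ-hyperbolic space form. -/
def expH {n : ℕ} (κ : ℝ) (p v : Fin (n+1) → ℝ) : Fin (n+1) → ℝ :=
  Real.cosh (Real.sqrt κ * lnorm v) • p +
    (Real.sinh (Real.sqrt κ * lnorm v) / (Real.sqrt κ * lnorm v)) • v

/-- The cone spanned by a set. -/
def coneOf {n : ℕ} (C : Set (Fin (n+1) → ℝ)) : Set (Fin (n+1) → ℝ) :=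
  {x | ∃ t : ℝ, 0 ≤ t ∧ ∃ p ∈ C, x = t • p}

/-- The Lorentz cone. -/
def LorentzCone {n : ℕ} : Set (Fin (n+1) → ℝ) :=
  {x | lip x x ≤ 0 ∧ 0 ≤ x (Fin.last n)}

/-- The interior of the Lorentz cone. -/
def LorentzConeInt {n : ℕ} : Set (Fin (n+1) → ℝ) :=
  {x | lip x x < 0 ∧ 0 < x (Fin.last n)}

/-- Euclidean gradient of f at p. -/
def euclGrad {n : ℕ} (f : (Fin (n+1) → ℝ) → ℝ) (p : Fin (n+1) → ℝ) : Fin (n+1) → ℝ :=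
  fun i => fderiv ℝ f p (Pi.single i 1)

/-- Riemannian gradient on the κ-hyperbolic space form. -/
def gradH {n : ℕ} (κ : ℝ) (f : (Fin (n+1) → ℝ) → ℝ) (p : Fin (n+1) → ℝ) : Fin (n+1) → ℝ :=
  projT κ p (Jm (euclGrad f p))

/-- Parallel transport from T_p to T_q along the geodesic. -/
def ptrans {n : ℕ} (κ : ℝ) (p q v : Fin (n+1) → ℝ) : Fin (n+1) → ℝ :=
  v - ((κ / (κ * lip p q - 1)) * lip q v) • (p + q)

theorem lip_comm' {n : ℕ} (x y : Fin (n+1) → ℝ) : lip x y = lip y x := by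
  simp only [lip, mul_comm]

theorem lip_add_l {n : ℕ} (x y z : Fin (n+1) → ℝ) : lip (x + y) z = lip x z + lip y z := by
  simp only [lip, Pi.add_apply, add_mul, Finset.sum_add_distrib]; ring

theorem lip_smul_l {n : ℕ} (c : ℝ) (x z : Fin (n+1) → ℝ) : lip (c • x) z = c * lip x z := by
  simp only [lip, Pi.smul_apply, smul_eq_mul, mul_assoc, ← Finset.mul_sum]; ring

theorem lip_neg_l {n : ℕ} (x z : Fin (n+1) → ℝ) : lip (-x) z = - lip x z := by
  have := lip_smul_l (-1) x z
  simpa using this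

theorem lip_sub_l {n : ℕ} (x y z : Fin (n+1) → ℝ) : lip (x - y) z = lip x z - lip y z := by
  rw [sub_eq_add_neg, lip_add_l, lip_neg_l]; ring

theorem lip_add_r {n : ℕ} (x y z : Fin (n+1) → ℝ) : lip z (x + y) = lip z x + lip z y := by
  rw [lip_comm', lip_add_l, lip_comm' x, lip_comm' y]

theorem lip_smul_r {n : ℕ} (c : ℝ) (x z : Fin (n+1) → ℝ) : lip z (c • x) = c * lip z x := by
  rw [lip_comm', lip_smul_l, lip_comm' x]

theorem lip_neg_r {n : ℕ} (x z : Fin (n+1) → ℝ) : lip z (-x) = - lip z x := by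
  rw [lip_comm', lip_neg_l, lip_comm' x]

theorem lip_sub_r {n : ℕ} (x y z : Fin (n+1) → ℝ) : lip z (x - y) = lip z x - lip z y := by
  rw [lip_comm', lip_sub_l, lip_comm' x, lip_comm' y]

theorem lip_zero_l {n : ℕ} (z : Fin (n+1) → ℝ) : lip 0 z = 0 := by
  simp [lip]

theorem tan_key {n : ℕ} {κ : ℝ} (hκ : 0 < κ) {z x : Fin (n+1) → ℝ} (hz : z ∈ Hyp κ)
    (hx : lip z x = 0) : 0 ≤ lip x x ∧ (lip x x = 0 → x = 0) := by
  obtain ⟨h1, h2⟩ := hz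
  have cs := Finset.sum_mul_sq_le_sq_mul_sq Finset.univ
    (fun i : Fin n => z i.castSucc) (fun i : Fin n => x i.castSucc)
  simp only [lip, ← sq] at h1 hx ⊢
  set Z := ∑ i : Fin n, z i.castSucc ^ 2
  set X := ∑ i : Fin n, x i.castSucc ^ 2 with hX
  have hX0 : 0 ≤ X := Finset.sum_nonneg fun i _ => sq_nonneg _
  set z0 := z (Fin.last n)
  set x0 := x (Fin.last n) with hx0
  have e1 : Z = z0 ^ 2 - 1 / κ := by rw [neg_div] at h1; linarith
  have e2 : ∑ i : Fin n, z i.castSucc * x i.castSucc = z0 * x0 := by linarith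
  rw [e2, e1] at cs
  have e3 : X * (1 / κ) ≤ z0 ^ 2 * (X - x0 ^ 2) := by nlinarith
  have hk : 0 < 1 / κ := by positivity
  have hz2 : 0 < z0 ^ 2 := by positivity
  constructor
  · by_contra hneg
    push Not at hneg
    nlinarith [mul_nonneg hX0 hk.le]
  · intro h0
    rw [h0] at e3
    have hX' : X = 0 := by nlinarith
    have hx0' : x0 = 0 := by
      have : x0 ^ 2 = 0 := by linarith
      exact pow_eq_zero_iff (two_ne_zero) |>.1 this
    rw [hX, Finset.sum_eq_zero_iff_of_nonneg (fun i _ => sq_nonneg _)] at hX'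
    funext i
    refine Fin.lastCases ?_ (fun j => ?_) i
    · simpa using hx0'
    · have := hX' j (Finset.mem_univ _)
      simpa using this

theorem lnorm_sq {n : ℕ} {κ : ℝ} (hκ : 0 < κ) {z x : Fin (n+1) → ℝ} (hz : z ∈ Hyp κ)
    (hx : lip z x = 0) : lnorm x ^ 2 = lip x x := Real.sq_sqrt (tan_key hκ hz hx).1

theorem lnorm_nonneg' {n : ℕ} (x : Fin (n+1) → ℝ) : 0 ≤ lnorm x := Real.sqrt_nonneg _

theorem tan_cs {n : ℕ} {κ : ℝ} (hκ : 0 < κ) {z x y : Fin (n+1) → ℝ} (hz : z ∈ Hyp κ)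
    (hx : lip z x = 0) (hy : lip z y = 0) : |lip x y| ≤ lnorm x * lnorm y := by
  apply abs_le_of_sq_le_sq _ (mul_nonneg (lnorm_nonneg' _) (lnorm_nonneg' _))
  rw [mul_pow, lnorm_sq hκ hz hx, lnorm_sq hκ hz hy]
  obtain ⟨hB, hB0⟩ := tan_key hκ hz hy
  rcases hB.eq_or_lt with h | h
  · rw [hB0 h.symm, lip_comm', lip_zero_l]; simp [lip_zero_l]
  · have := (tan_key hκ hz (x := lip y y • x - lip x y • y)
      (by rw [lip_sub_r, lip_smul_r, lip_smul_r, hx, hy]; ring)).1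
    simp only [lip_sub_r, lip_smul_r, lip_sub_l, lip_smul_l] at this
    rw [lip_comm' y x] at this
    have h2 : 0 ≤ lip y y * (lip x x * lip y y - lip x y ^ 2) := by linarith
    have := nonneg_of_mul_nonneg_right h2 h
    linarith

theorem lip_neg_of_hyp {n : ℕ} {κ : ℝ} (hκ : 0 < κ) {z x : Fin (n+1) → ℝ} (hz : z ∈ Hyp κ)
    (hx : lip x x = -1/κ) : (x (Fin.last n)) ≤ 0 → 0 ≤ lip z x := by
  intro hx0
  obtain ⟨h1, h2⟩ := hz
  have cs := Finset.sum_mul_sq_le_sq_mul_sq Finset.univ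
    (fun i : Fin n => z i.castSucc) (fun i : Fin n => x i.castSucc)
  simp only [lip, ← sq] at h1 hx ⊢
  set Z := ∑ i : Fin n, z i.castSucc ^ 2
  set X := ∑ i : Fin n, x i.castSucc ^ 2 with hX
  have hX0 : 0 ≤ X := Finset.sum_nonneg fun i _ => sq_nonneg _
  have hk : 0 < 1 / κ := by positivity
  rw [neg_div] at h1 hx
  have : Z * X ≤ z (Fin.last n) ^ 2 * x (Fin.last n) ^ 2 :=
    mul_le_mul (by linarith) (by linarith) hX0 (by positivity)
  have h3 := abs_le_of_sq_le_sq (a := ∑ i : Fin n, z i.castSucc * x i.castSucc)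
    (b := z (Fin.last n) * -x (Fin.last n)) (by nlinarith) (by nlinarith)
  have := (abs_le.1 h3).1
  linarith

theorem lip_projT {n : ℕ} {κ : ℝ} (hκ : 0 < κ) {p : Fin (n+1) → ℝ} (hp : p ∈ Hyp κ)
    (x : Fin (n+1) → ℝ) : lip p (projT κ p x) = 0 := by
  have := hp.1
  rw [projT, lip_add_r, lip_smul_r, this]; field_simp; ring

theorem lip_projT2 {n : ℕ} {κ : ℝ} (hκ : 0 < κ) {p : Fin (n+1) → ℝ} (hp : p ∈ Hyp κ)
    (x y : Fin (n+1) → ℝ) : lip (projT κ p x) (projT κ p y) = lip x y + κ * lip p x * lip p y := by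
  have := hp.1
  simp only [projT, lip_add_r, lip_smul_r, lip_add_l, lip_smul_l, this, lip_comm' x p]
  field_simp; ring

theorem one_le_of_hyp {n : ℕ} {κ : ℝ} (hκ : 0 < κ) {z x : Fin (n+1) → ℝ} (hz : z ∈ Hyp κ)
    (hx : x ∈ Hyp κ) : 1 ≤ -(κ * lip z x) := by
  have h1 := (tan_key hκ hz (lip_projT hκ hz x)).1
  rw [lip_projT2 hκ hz, hx.1] at h1
  have h2 : 1 ≤ (κ * lip z x) ^ 2 := by
    have : 0 ≤ κ * (-1 / κ + κ * lip z x * lip z x) := by positivity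
    have e : κ * (-1 / κ + κ * lip z x * lip z x) = (κ * lip z x) ^ 2 - 1 := by field_simp; ring
    linarith
  have h3 : lip z x ≤ 0 := by
    have h4 := lip_neg_of_hyp hκ hz (x := -x) (by rw [lip_neg_l, lip_neg_r, hx.1]; ring)
      (by have := hx.2; simp; linarith)
    rw [lip_neg_r] at h4; linarith
  nlinarith [mul_nonneg hκ.le (neg_nonneg.2 h3)]

theorem expH_mem {n : ℕ} {κ : ℝ} (hκ : 0 < κ) {p v : Fin (n+1) → ℝ} (hp : p ∈ Hyp κ)
    (hv : lip p v = 0) : expH κ p v ∈ Hyp κ ∧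
      -(κ * lip p (expH κ p v)) = Real.cosh (Real.sqrt κ * lnorm v) := by
  have hn := lnorm_sq hκ hp hv
  have hpp := hp.1
  have hk : Real.sqrt κ ^ 2 = κ := Real.sq_sqrt hκ.le
  have hk0 : 0 < Real.sqrt κ := Real.sqrt_pos.2 hκ
  have e1 : lip p (expH κ p v) = -(Real.cosh (Real.sqrt κ * lnorm v) / κ) := by
    rw [expH, lip_add_r, lip_smul_r, lip_smul_r, hpp, hv]; ring
  have e2 : lip (expH κ p v) (expH κ p v) = -1 / κ := by
    simp only [expH, lip_add_r, lip_smul_r, lip_add_l, lip_smul_l, hpp, hv, lip_comm' v p, ← hn]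
    rcases eq_or_ne (lnorm v) 0 with h | h
    · simp [h]
    · have := Real.cosh_sq (Real.sqrt κ * lnorm v)
      field_simp
      linear_combination (-lnorm v * Real.cosh (Real.sqrt κ * lnorm v) ^ 2) * hk - κ * lnorm v * this + lnorm v * hk
  have hc := Real.cosh_pos (Real.sqrt κ * lnorm v)
  refine ⟨⟨e2, ?_⟩, ?_⟩
  · by_contra h
    have := lip_neg_of_hyp hκ hp e2 (not_lt.1 h)
    rw [e1] at this
    have : 0 < Real.cosh (Real.sqrt κ * lnorm v) / κ := by positivity
    linarith
  · rw [e1]; field_simp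

theorem dH_spec {n : ℕ} {κ : ℝ} (hκ : 0 < κ) {p q : Fin (n+1) → ℝ} (hp : p ∈ Hyp κ)
    (hq : q ∈ Hyp κ) : 0 ≤ dH κ p q ∧ Real.cosh (Real.sqrt κ * dH κ p q) = -(κ * lip p q) := by
  have h := one_le_of_hyp hκ hp hq
  have hk0 : 0 < Real.sqrt κ := Real.sqrt_pos.2 hκ
  have h1 : 0 ≤ Real.arcosh (-(κ * lip p q)) := Real.arcosh_nonneg h
  have h2 : dH κ p q = (1 / Real.sqrt κ) * Real.arcosh (-(κ * lip p q)) := rfl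
  refine ⟨by rw [h2]; positivity, ?_⟩
  rw [h2, ← mul_assoc, mul_one_div_cancel hk0.ne', one_mul, Real.cosh_arcosh h]

theorem dH_of_cosh {n : ℕ} {κ : ℝ} {p q : Fin (n+1) → ℝ} {s : ℝ} (hs : 0 ≤ s)
    (h : -(κ * lip p q) = Real.cosh s) : dH κ p q = s / Real.sqrt κ := by
  have h2 : dH κ p q = (1 / Real.sqrt κ) * Real.arcosh (-(κ * lip p q)) := rfl
  rw [h2, h, Real.arcosh_cosh hs]; ring

theorem lnorm_projT {n : ℕ} {κ : ℝ} (hκ : 0 < κ) {p q : Fin (n+1) → ℝ} (hp : p ∈ Hyp κ)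
    (hq : q ∈ Hyp κ) : lnorm (projT κ p q) = Real.sinh (Real.sqrt κ * dH κ p q) / Real.sqrt κ := by
  obtain ⟨h1, h2⟩ := dH_spec hκ hp hq
  have hk : Real.sqrt κ ^ 2 = κ := Real.sq_sqrt hκ.le
  have hk0 : 0 < Real.sqrt κ := Real.sqrt_pos.2 hκ
  have hs : 0 ≤ Real.sinh (Real.sqrt κ * dH κ p q) := Real.sinh_nonneg_iff.2 (by positivity)
  have h3 := lnorm_sq hκ hp (lip_projT hκ hp q)
  rw [lip_projT2 hκ hp, hq.1] at h3
  refine (sq_eq_sq₀ (lnorm_nonneg' _) (by positivity)).1 ?_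
  rw [h3, div_pow, hk, Real.sinh_sq, h2]
  field_simp; ring

theorem sinh_conv {t y : ℝ} (ht0 : 0 ≤ t) (ht1 : t ≤ 1) (hy : 0 ≤ y) :
    Real.sinh (t * y) ≤ t * Real.sinh y := by
  have hd : ∀ x, HasDerivAt (fun x => Real.sinh (t * x) - t * Real.sinh x)
      (Real.cosh (t * x) * (t * 1) - t * Real.cosh x) x := fun x =>
    (((hasDerivAt_id x).const_mul t).sinh).sub ((Real.hasDerivAt_sinh x).const_mul t)
  have : AntitoneOn (fun x => Real.sinh (t * x) - t * Real.sinh x) (Set.Ici 0) := by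
    apply antitoneOn_of_deriv_nonpos (convex_Ici 0)
    · exact fun x _ => (hd x).continuousAt.continuousWithinAt
    · exact fun x _ => (hd x).differentiableAt.differentiableWithinAt
    · intro x hx
      rw [(hd x).deriv]
      simp at hx
      have : Real.cosh (t * x) ≤ Real.cosh x := by
        rw [Real.cosh_le_cosh, abs_of_nonneg (by positivity), abs_of_nonneg hx.le]
        nlinarith
      nlinarith
  have := this (Set.self_mem_Ici) (Set.mem_Ici.2 hy) hy
  simp at this
  linarith

theorem tanh_anti {a b : ℝ} (hb : 0 < b) (hab : b ≤ a) :
    b * (Real.sinh a * Real.cosh b) ≤ a * (Real.sinh b * Real.cosh a) := by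
  have h := sinh_conv (t := (a - b) / (a + b)) (y := a + b)
    (div_nonneg (by linarith) (by linarith)) ((div_le_one (by linarith)).2 (by linarith))
    (by linarith)
  have h0 : 0 < a + b := by linarith
  rw [div_mul_cancel₀ _ h0.ne', div_mul_eq_mul_div, le_div_iff₀ h0, Real.sinh_sub,
    Real.sinh_add] at h
  linarith

/-- real-number core of the projection inequality -/
theorem core_ineq {a b M : ℝ} (ha : 0 ≤ a) (hb : 0 < b) (hM : M ≤ a * b)
    (h : Real.cosh a * Real.sinh b ^ 2 ≤
      M * (Real.sinh a / a) * (Real.sinh b / b) * Real.cosh b) : b ^ 2 ≤ M := by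
  have hsb : 0 < Real.sinh b := Real.sinh_pos_iff.2 hb
  have hca := Real.cosh_pos a
  have hcb := Real.cosh_pos b
  rcases ha.eq_or_lt with h0 | ha
  · rw [← h0] at h
    simp at h
    nlinarith [sq_nonneg (Real.sinh b), pow_pos hsb 2]
  have hsa : 0 < Real.sinh a := Real.sinh_pos_iff.2 ha
  have h1 : a * b * (Real.cosh a * Real.sinh b) ≤ M * (Real.sinh a * Real.cosh b) := by
    have e : M * (Real.sinh a / a) * (Real.sinh b / b) * Real.cosh b =
      (M * (Real.sinh a * Real.cosh b)) * (Real.sinh b / (a * b)) := by field_simp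
    have e' : Real.cosh a * Real.sinh b ^ 2 =
      (a * b * (Real.cosh a * Real.sinh b)) * (Real.sinh b / (a * b)) := by field_simp
    rw [e, e'] at h
    exact le_of_mul_le_mul_right h (by positivity)
  have hab : b ≤ a := by
    have h2 : a * b * (Real.cosh a * Real.sinh b) ≤ a * b * (Real.sinh a * Real.cosh b) :=
      h1.trans (mul_le_mul_of_nonneg_right hM (by positivity))
    have h3 := le_of_mul_le_mul_left h2 (by positivity)
    have h4 : Real.sinh (b - a) ≤ 0 := by rw [Real.sinh_sub]; linarith
    have := Real.sinh_nonpos_iff.1 h4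
    linarith
  have h5 := tanh_anti hb hab
  have hMpos : 0 ≤ M := by
    by_contra hn
    push Not at hn
    have : 0 < a * b * (Real.cosh a * Real.sinh b) := by positivity
    nlinarith [mul_pos hsa hcb]
  have h6 : M * (b * (Real.sinh a * Real.cosh b)) ≤ M * (a * (Real.sinh b * Real.cosh a)) :=
    mul_le_mul_of_nonneg_left h5 hMpos
  have h7 : b ^ 2 * (a * (Real.sinh b * Real.cosh a)) ≤ M * (a * (Real.sinh b * Real.cosh a)) := by
    nlinarith
  exact le_of_mul_le_mul_right h7 (by positivity)

theorem dH_comm' {n : ℕ} (κ : ℝ) (p q : Fin (n+1) → ℝ) : dH κ p q = dH κ q p := by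
  rw [dH, dH, lip_comm']

theorem proj_sign {n : ℕ} {κ : ℝ} (hκ : 0 < κ) {q w p : Fin (n+1) → ℝ} (hq : q ∈ Hyp κ)
    (hw : w ∈ Hyp κ) (hp : p ∈ Hyp κ) (h : lip (logH κ q w) (logH κ q p) ≤ 0)
    (hd : 0 < dH κ q p) : lip (projT κ q w) (projT κ q p) ≤ 0 := by
  have hk0 : 0 < Real.sqrt κ := Real.sqrt_pos.2 hκ
  have hs : 0 < lnorm (projT κ q p) := by
    rw [lnorm_projT hκ hq hp]
    exact div_pos (Real.sinh_pos_iff.2 (by positivity)) hk0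
  rcases (dH_spec hκ hq hw).1.eq_or_lt with h0 | h0
  · have h1 : lnorm (projT κ q w) = 0 := by rw [lnorm_projT hκ hq hw, ← h0]; simp
    have h2 := tan_cs hκ hq (lip_projT hκ hq w) (lip_projT hκ hq p)
    rw [h1, zero_mul] at h2
    exact (le_abs_self _).trans h2
  · have hs' : 0 < lnorm (projT κ q w) := by
      rw [lnorm_projT hκ hq hw]
      exact div_pos (Real.sinh_pos_iff.2 (by positivity)) hk0
    rw [logH, logH, lip_smul_l, lip_smul_r, ← mul_assoc] at h
    have hpos : 0 < dH κ q w / lnorm (projT κ q w) * (dH κ q p / lnorm (projT κ q p)) := by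
      positivity
    by_contra hn
    push Not at hn
    have := mul_pos hpos hn
    linarith

/-- The projection inequality. -/
theorem proj_ineq {n : ℕ} {κ : ℝ} (hκ : 0 < κ) {q p v : Fin (n+1) → ℝ} (hq : q ∈ Hyp κ)
    (hp : p ∈ Hyp κ) (hv : lip p v = 0) {α : ℝ} (hα : 0 < α)
    (h : lip (logH κ q (expH κ p (-(α • v)))) (logH κ q p) ≤ 0) (hd : 0 < dH κ p q) :
    lip v (logH κ p q) ≤ -(1 / α) * dH κ p q ^ 2 := by
  have hk : Real.sqrt κ ^ 2 = κ := Real.sq_sqrt hκ.le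
  have hk0 : 0 < Real.sqrt κ := Real.sqrt_pos.2 hκ
  have hV : lip p (-(α • v)) = 0 := by rw [lip_neg_r, lip_smul_r, hv]; ring
  obtain ⟨hw, hca⟩ := expH_mem hκ hp hV
  have h1 := proj_sign hκ hq hw hp h (by rwa [dH_comm'])
  obtain ⟨-, hcb⟩ := dH_spec hκ hp hq
  rw [lip_projT2 hκ hq] at h1
  set N := lnorm (-(α • v)) with hN
  set a := Real.sqrt κ * N with ha
  set b := Real.sqrt κ * dH κ p q with hb
  have hb0 : 0 < b := by positivity
  have hsb : 0 < Real.sinh b := Real.sinh_pos_iff.2 hb0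
  have ha0 : 0 ≤ a := mul_nonneg hk0.le (lnorm_nonneg' _)
  have hlog : logH κ p q = (b / Real.sinh b) • projT κ p q := by
    rw [logH, lnorm_projT hκ hp hq, ← hb]; congr 1; rw [hb]; field_simp
  have hlogn : lnorm (logH κ p q) = dH κ p q := by
    have ht : lip p (logH κ p q) = 0 := by rw [hlog, lip_smul_r, lip_projT hκ hp]; ring
    refine (sq_eq_sq₀ (lnorm_nonneg' _) hd.le).1 ?_
    rw [lnorm_sq hκ hp ht, hlog, lip_smul_l, lip_smul_r, ← lnorm_sq hκ hp (lip_projT hκ hp q),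
      lnorm_projT hκ hp hq, ← hb]
    field_simp
    rw [hb]; ring
  have htan : lip p (logH κ p q) = 0 := by rw [hlog, lip_smul_r, lip_projT hκ hp]; ring
  set m := lip v (logH κ p q) with hm
  have hqv : lip q v = m * (Real.sinh b / b) := by
    rw [hm, hlog, lip_smul_r, projT, lip_add_r, lip_smul_r, lip_comm' v p, hv, lip_comm' v q]
    field_simp; ring
  have hM : -(κ * α * m) ≤ a * b := by
    have h2 := tan_cs hκ hp hV htan
    rw [hlogn, ← hN, lip_neg_l, lip_smul_l, ← hm] at h2
    have h3 := (le_abs_self _).trans h2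
    have : a * b = κ * (N * dH κ p q) := by rw [ha, hb, ← hk]; simp only [hk]; linear_combination (N * dH κ p q) * hk
    rw [this]
    nlinarith
  have hqw : lip q (expH κ p (-(α • v))) =
      Real.cosh a * lip p q - α * (Real.sinh a / a) * lip q v := by
    rw [expH, lip_add_r, lip_smul_r, lip_smul_r, lip_neg_r, lip_smul_r, ← hN, ← ha, lip_comm' q p]
    ring
  have hfin := core_ineq ha0 hb0 hM (by
    have e1 : lip (expH κ p (-(α • v))) p = - (Real.cosh a / κ) := by
      rw [lip_comm', ← hca]; field_simp
    have e2 : lip p q = - (Real.cosh b / κ) := by rw [hcb]; field_simp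
    rw [hqw, e1, lip_comm' q p, e2, hqv] at h1
    have h4 := mul_le_mul_of_nonneg_left h1 hκ.le
    have e3 : κ * (-(Real.cosh a / κ) + κ * (Real.cosh a * -(Real.cosh b / κ) -
        α * (Real.sinh a / a) * (m * (Real.sinh b / b))) * -(Real.cosh b / κ)) =
        Real.cosh a * (Real.cosh b ^ 2 - 1) -
        (-(κ * α * m)) * (Real.sinh a / a) * (Real.sinh b / b) * Real.cosh b := by
      generalize Real.sinh a / a = A
      generalize Real.sinh b / b = B
      field_simp; ring
    rw [e3, mul_zero, Real.cosh_sq] at h4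
    linarith)
  have e5 : b ^ 2 = κ * dH κ p q ^ 2 := by rw [hb, mul_pow, hk]
  rw [e5] at hfin
  have h6 : dH κ p q ^ 2 ≤ -(α * m) := by
    refine le_of_mul_le_mul_left ?_ hκ
    linarith
  have h7 : m = (1 / α) * (α * m) := by field_simp
  rw [h7]
  have : 0 < 1 / α := by positivity
  nlinarith

theorem fderiv_lip {n : ℕ} {κ : ℝ} (f : (Fin (n+1) → ℝ) → ℝ)
    {z x : Fin (n+1) → ℝ} (hx : lip z x = 0) :
    fderiv ℝ f z x = lip (gradH κ f z) x := by
  rw [gradH, projT, lip_add_l, lip_smul_l, hx]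
  have h1 : x = ∑ i, x i • (Pi.single i (1:ℝ) : Fin (n+1) → ℝ) := by
    funext j
    simp [Finset.sum_apply, Pi.single_apply]
  conv_lhs => rw [h1]
  rw [map_sum, Fin.sum_univ_castSucc]
  simp only [map_smul, lip, Jm, euclGrad, smul_eq_mul]
  simp [Fin.castSucc_ne_last, mul_comm]

theorem geo_mem {n : ℕ} {κ : ℝ} (hκ : 0 < κ) {C : Set (Fin (n+1) → ℝ)} (hC : C ⊆ Hyp κ)
    (hconv : Convex ℝ (coneOf C)) {p q g : Fin (n+1) → ℝ} (hp : p ∈ C) (hq : q ∈ C)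
    (hg : g ∈ Hyp κ) {a b : ℝ} (ha : 0 ≤ a) (hb : 0 ≤ b) (h : g = a • p + b • q) : g ∈ C := by
  have h1 : (2 * a) • p ∈ coneOf C := ⟨2 * a, by positivity, p, hp, rfl⟩
  have h2 : (2 * b) • q ∈ coneOf C := ⟨2 * b, by positivity, q, hq, rfl⟩
  have h3 := hconv h1 h2 (a := 1/2) (b := 1/2) (by norm_num) (by norm_num) (by norm_num)
  have h4 : (1/2 : ℝ) • (2 * a) • p + (1/2 : ℝ) • (2 * b) • q = g := by
    rw [h, smul_smul, smul_smul]; congr 2 <;> ring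
  rw [h4] at h3
  obtain ⟨t, ht, y, hy, rfl⟩ := h3
  have e1 := hg.1
  have e2 := (hC hy).1
  rw [lip_smul_l, lip_smul_r, e2] at e1
  have : t = 1 := by
    have : t ^ 2 = 1 := by field_simp at e1; linarith
    nlinarith
  rw [this, one_smul]; exact hy

/-- The descent inequality. -/
theorem descent {n : ℕ} {κ : ℝ} (hκ : 0 < κ) {C : Set (Fin (n+1) → ℝ)} (hC : C ⊆ Hyp κ)
    (hconv : Convex ℝ (coneOf C)) (f : (Fin (n+1) → ℝ) → ℝ) (hf : Differentiable ℝ f)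
    (L : ℝ)
    (hLip : ∀ a ∈ C, ∀ b ∈ C,
      lnorm (ptrans κ a b (gradH κ f a) - gradH κ f b) ≤ L * dH κ a b)
    {p q : Fin (n+1) → ℝ} (hp : p ∈ C) (hq : q ∈ C) (hd : 0 < dH κ p q) :
    f q ≤ f p + lip (gradH κ f p) (logH κ p q) + L / 2 * dH κ p q ^ 2 := by
  have hk : Real.sqrt κ ^ 2 = κ := Real.sq_sqrt hκ.le
  have hk0 : 0 < Real.sqrt κ := Real.sqrt_pos.2 hκ
  have hpH := hC hp
  have hqH := hC hq
  have hpp := hpH.1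
  obtain ⟨-, hcb⟩ := dH_spec hκ hpH hqH
  set s := Real.sqrt κ * dH κ p q with hs
  have hs0 : 0 < s := by positivity
  have hS : 0 < Real.sinh s := Real.sinh_pos_iff.2 hs0
  set u := (1 / Real.sinh s) • projT κ p q with hu
  have hpu : lip p u = 0 := by rw [hu, lip_smul_r, lip_projT hκ hpH]; ring
  have huu : lip u u = 1 / κ := by
    rw [hu, lip_smul_l, lip_smul_r, ← lnorm_sq hκ hpH (lip_projT hκ hpH q),
      lnorm_projT hκ hpH hqH, ← hs, div_pow, hk]
    field_simp
  have hlog : logH κ p q = s • u := by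
    rw [logH, lnorm_projT hκ hpH hqH, ← hs, hu, smul_smul]; congr 1; rw [hs]; field_simp
  have hproj : projT κ p q = q - Real.cosh s • p := by
    rw [projT, hcb, neg_smul, sub_neg_eq_add]
  set v := gradH κ f p with hv
  have hpv : lip p v = 0 := lip_projT hκ hpH _
  set γ : ℝ → (Fin (n+1) → ℝ) := fun τ => Real.cosh τ • p + Real.sinh τ • u with hγ
  set γ' : ℝ → (Fin (n+1) → ℝ) := fun τ => Real.sinh τ • p + Real.cosh τ • u with hγ'
  have hγ0 : γ 0 = p := by simp [hγ]
  have hγs : γ s = q := by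
    simp only [hγ, hu, hproj, smul_smul]
    rw [mul_one_div_cancel hS.ne', one_smul]; abel
  have hγd : ∀ τ, HasDerivAt γ (γ' τ) τ := fun τ =>
    ((Real.hasDerivAt_cosh τ).smul_const p).add ((Real.hasDerivAt_sinh τ).smul_const u)
  have hγγ : ∀ τ, lip (γ τ) (γ τ) = -1 / κ := fun τ => by
    simp only [hγ, lip_add_l, lip_add_r, lip_smul_l, lip_smul_r, hpp, huu, hpu, lip_comm' u p]
    have := Real.cosh_sq τ
    field_simp
    linear_combination -this
  have hγγ' : ∀ τ, lip (γ τ) (γ' τ) = 0 := fun τ => by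
    simp only [hγ, hγ', lip_add_l, lip_add_r, lip_smul_l, lip_smul_r, hpp, huu, hpu, lip_comm' u p]
    ring
  have hγ'γ' : ∀ τ, lip (γ' τ) (γ' τ) = 1 / κ := fun τ => by
    simp only [hγ', lip_add_l, lip_add_r, lip_smul_l, lip_smul_r, hpp, huu, hpu, lip_comm' u p]
    have := Real.cosh_sq τ
    field_simp
    linear_combination this
  have hpγ : ∀ τ, lip p (γ τ) = -(Real.cosh τ / κ) := fun τ => by
    simp only [hγ, lip_add_r, lip_smul_r, hpp, hpu]; ring
  have hγH : ∀ τ, γ τ ∈ Hyp κ := fun τ => by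
    refine ⟨hγγ τ, ?_⟩
    by_contra h
    have h1 := lip_neg_of_hyp hκ hpH (hγγ τ) (not_lt.1 h)
    rw [hpγ] at h1
    have : 0 < Real.cosh τ / κ := div_pos (Real.cosh_pos τ) hκ
    linarith
  have hγC : ∀ τ, 0 ≤ τ → τ ≤ s → γ τ ∈ C := fun τ h0 h1 => by
    refine geo_mem hκ hC hconv hp hq (hγH τ) (a := Real.sinh (s - τ) / Real.sinh s)
      (b := Real.sinh τ / Real.sinh s)
      (div_nonneg (Real.sinh_nonneg_iff.2 (by linarith)) hS.le)
      (div_nonneg (Real.sinh_nonneg_iff.2 h0) hS.le) ?_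
    simp only [hγ, hu, hproj]
    funext i
    simp only [Pi.add_apply, Pi.smul_apply, Pi.sub_apply, smul_eq_mul]
    rw [Real.sinh_sub]
    field_simp
    ring
  have hdγ : ∀ τ, 0 ≤ τ → dH κ p (γ τ) = τ / Real.sqrt κ := fun τ h0 =>
    dH_of_cosh h0 (by rw [hpγ]; field_simp)
  have hbound : ∀ τ, 0 ≤ τ → τ ≤ s →
      lip (gradH κ f (γ τ)) (γ' τ) ≤ lip v u + L * τ / κ := fun τ h0 h1 => by
    have hl := hLip p hp (γ τ) (hγC τ h0 h1)
    rw [hdγ τ h0, ← hv] at hl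
    have hc := Real.cosh_pos τ
    have hvγ : lip (γ τ) v = Real.sinh τ * lip v u := by
      simp only [hγ, lip_add_l, lip_smul_l, hpv, lip_comm' u v]; ring
    have hden : κ * lip p (γ τ) - 1 = -(Real.cosh τ + 1) := by rw [hpγ]; field_simp; ring
    have hpt : lip (γ τ) (ptrans κ p (γ τ) v) = 0 := by
      rw [ptrans, hden, lip_sub_r, lip_smul_r, lip_add_r, hγγ, lip_comm' (γ τ) p, hpγ]
      field_simp
      ring
    have hpt' : lip (ptrans κ p (γ τ) v) (γ' τ) = lip v u := by
      have e1 : lip v (γ' τ) = Real.cosh τ * lip v u := by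
        simp only [hγ', lip_add_r, lip_smul_r, lip_comm' v p, hpv]; ring
      have e2 : lip p (γ' τ) = -(Real.sinh τ / κ) := by
        simp only [hγ', lip_add_r, lip_smul_r, hpp, hpu]; ring
      rw [ptrans, hden, lip_sub_l, lip_smul_l, lip_add_l p (γ τ), hγγ', e1, e2, hvγ]
      have := Real.cosh_sq τ
      field_simp
      linear_combination lip v u * this
    have hg : lip (γ τ) (gradH κ f (γ τ)) = 0 := lip_projT hκ (hγH τ) _
    have hcs := tan_cs hκ (hγH τ) (x := ptrans κ p (γ τ) v - gradH κ f (γ τ)) (y := γ' τ)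
      (by rw [lip_sub_r, hpt, hg]; ring) (hγγ' τ)
    have hn : lnorm (γ' τ) = 1 / Real.sqrt κ := by
      rw [lnorm, hγ'γ', Real.sqrt_div zero_le_one, Real.sqrt_one]
    rw [lip_sub_l, hpt', hn] at hcs
    have h5 := (neg_le_abs _).trans hcs
    have h6 := mul_le_mul_of_nonneg_right hl (by positivity : 0 ≤ 1 / Real.sqrt κ)
    have h7 : L * (τ / Real.sqrt κ) * (1 / Real.sqrt κ) = L * τ / κ := by
      rw [← hk]; field_simp; simp [hk]
    linarith
  have hG : ∀ τ, HasDerivAt (fun τ => f (γ τ) - τ * lip v u - L / (2 * κ) * τ ^ 2)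
      (lip (gradH κ f (γ τ)) (γ' τ) - 1 * lip v u - L / (2 * κ) * (2 * τ ^ (2 - 1) * 1)) τ :=
    fun τ => by
      have h1 := (hf (γ τ)).hasFDerivAt.comp_hasDerivAt τ (hγd τ)
      rw [fderiv_lip (κ := κ) f (hγγ' τ)] at h1
      exact (h1.sub ((hasDerivAt_id τ).mul_const _)).sub (((hasDerivAt_id τ).pow 2).const_mul _)
  have hanti : AntitoneOn (fun τ => f (γ τ) - τ * lip v u - L / (2 * κ) * τ ^ 2) (Set.Icc 0 s) := by
    apply antitoneOn_of_deriv_nonpos (convex_Icc 0 s)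
    · exact fun x _ => (hG x).continuousAt.continuousWithinAt
    · exact fun x _ => (hG x).differentiableAt.differentiableWithinAt
    · intro x hx
      rw [interior_Icc] at hx
      rw [(hG x).deriv]
      have h8 := hbound x hx.1.le hx.2.le
      have : L / (2 * κ) * (2 * x ^ (2 - 1) * 1) = L * x / κ := by
        norm_num; field_simp
      linarith
  have hfin := hanti (Set.left_mem_Icc.2 hs0.le) (Set.right_mem_Icc.2 hs0.le) hs0.le
  simp only [hγ0, hγs] at hfin
  rw [hlog, lip_smul_r]
  have e9 : L / (2 * κ) * s ^ 2 = L / 2 * dH κ p q ^ 2 := by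
    rw [hs, mul_pow, hk]; field_simp
  linarith

/-- Descent property of the gradient projection method with constant step size:
if grad f is Lipschitz on C with constant L, 0 < α < 1/L, and
p_{k+1} = P_C(exp_{p_k}(−α grad f(p_k))) with p₀ ∈ C, then the sequence stays in C,
f(p_{k+1}) ≤ f(p_k) − ((1−αL)/(2α))·d(p_k,p_{k+1})², and (f(p_k)) is non-increasing. -/
theorem gradient_projection_constant_stepsize_descent {n : ℕ} (κ : ℝ) (hκ : 0 < κ)
    (C : Set (Fin (n+1) → ℝ)) (hC : C ⊆ Hyp κ) (hCc : IsClosed C)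
    (hconv : Convex ℝ (coneOf C))
    (f : (Fin (n+1) → ℝ) → ℝ) (hf : Differentiable ℝ f)
    (L : ℝ) (hL : 0 ≤ L)
    (hLip : ∀ a ∈ C, ∀ b ∈ C,
      lnorm (ptrans κ a b (gradH κ f a) - gradH κ f b) ≤ L * dH κ a b)
    (α : ℝ) (hα1 : 0 < α) (hα2 : α < 1 / L)
    (p : ℕ → Fin (n+1) → ℝ) (hp0 : p 0 ∈ C)
    (hrec : ∀ k : ℕ, p (k+1) ∈ C ∧
      (∀ y ∈ C, dH κ (expH κ (p k) (-(α • gradH κ f (p k)))) (p (k+1)) ≤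
        dH κ (expH κ (p k) (-(α • gradH κ f (p k)))) y) ∧
      (∀ y ∈ C, lip (logH κ (p (k+1)) (expH κ (p k) (-(α • gradH κ f (p k)))))
        (logH κ (p (k+1)) y) ≤ 0)) :
    (∀ k : ℕ, p k ∈ C) ∧
    (∀ k : ℕ, f (p (k+1)) ≤ f (p k) - ((1 - α * L) / (2 * α)) * dH κ (p k) (p (k+1)) ^ 2) ∧
    (∀ k : ℕ, f (p (k+1)) ≤ f (p k)) := by
  have hmem : ∀ k, p k ∈ C := fun k => by
    cases k with
    | zero => exact hp0
    | succ k => exact (hrec k).1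
  have hL0 : 0 < L := by
    rcases hL.eq_or_lt with h | h
    · rw [← h, div_zero] at hα2; linarith
    · exact h
  have hαL : α * L < 1 := (lt_div_iff₀ hL0).1 hα2
  have hstep : ∀ k : ℕ, f (p (k+1)) ≤
      f (p k) - ((1 - α * L) / (2 * α)) * dH κ (p k) (p (k+1)) ^ 2 := fun k => by
    have hpk := hC (hmem k)
    have hqk := hC (hmem (k+1))
    have hvar := (hrec k).2.2 (p k) (hmem k)
    have ht : lip (p k) (gradH κ f (p k)) = 0 := lip_projT hκ hpk _
    rcases (dH_spec hκ hpk hqk).1.eq_or_lt with h0 | h0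
    · have h1 : lnorm (projT κ (p k) (p (k+1))) = 0 := by
        rw [lnorm_projT hκ hpk hqk, ← h0]; simp
      have h2 := lnorm_sq hκ hpk (lip_projT hκ hpk (p (k+1)))
      rw [h1] at h2
      have h3 := (tan_key hκ hpk (lip_projT hκ hpk (p (k+1)))).2 (by rw [← h2]; ring)
      have h4 := (dH_spec hκ hpk hqk).2
      rw [← h0, mul_zero, Real.cosh_zero] at h4
      have h5 : p (k+1) = p k := by
        have h6 : κ * lip (p k) (p (k+1)) = -1 := by linarith
        rw [projT, h6, neg_smul, one_smul] at h3
        exact sub_eq_zero.1 (by rw [sub_eq_add_neg]; exact h3)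
      rw [← h0, h5]; simp
    · have h1 := proj_ineq hκ hqk hpk ht hα1 hvar h0
      have h2 := descent hκ hC hconv f hf L hLip (hmem k) (hmem (k+1)) h0
      have e : ((1 - α * L) / (2 * α)) * dH κ (p k) (p (k+1)) ^ 2 =
        (1 / α) * dH κ (p k) (p (k+1)) ^ 2 / 2 - L / 2 * dH κ (p k) (p (k+1)) ^ 2 := by
        field_simp
      have : 0 ≤ (1 / α) * dH κ (p k) (p (k+1)) ^ 2 := by positivity
      linarith
  refine ⟨hmem, hstep, fun k => (hstep k).trans ?_⟩
  have : 0 ≤ (1 - α * L) / (2 * α) := div_nonneg (by linarith) (by linarith)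
  nlinarith [mul_nonneg this (sq_nonneg (dH κ (p k) (p (k+1))))]
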